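/- Let A be a Hopf algebra over a field k with comultiplication Δ, counit ε and antipode S, and let Φ ∈ A⊗A⊗A be an invertible element satisfying: (id⊗ε⊗id)(Φ) = 1⊗1; (Δ⊗id)(Δ(a)) = Φ·(id⊗Δ)(Δ(a))·Φ^{-1} for all a ∈ A; and the 3-cocycle identity (Δ⊗id⊗id)(Φ)·(id⊗id⊗Δ)(Φ) = (Φ⊗1)·(id⊗Δ⊗id)(Φ)·(1⊗Φ). Define γ = Σ S(Φ')·Φ''·S(Φ''') and assume γ is invertible. Then (A, Φ, S, α = 1, β = γ^{-1}) is a quasi-Hopf algebra: for all a ∈ A, writing Δ(a) = Σ a'⊗a'', one has Σ S(a')·a'' = ε(a)·1 and Σ a'·γ^{-1}·S(a'') = ε(a)·γ^{-1}; and writing Φ = Σ Φ'⊗Φ''⊗Φ''' and Φ^{-1} = Σ \barΦ'⊗\barΦ''⊗\barΦ''', one has Σ S(Φ')·Φ''·γ^{-1}·S(Φ''') = 1 and Σ \barΦ'·γ^{-1}·S(\barΦ'')·\barΦ''' = 1. -/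

import Mathlib

open TensorProduct

set_option maxHeartbeats 1000000
set_option synthInstance.maxHeartbeats 400000

noncomputable section

/-- Generators of the restricted quantum group `Q = \bar U_i sl(2)`. -/
inductive QGen : Type
  | E | F | K | Kinv
deriving DecidableEq

/-- The free algebra on the generators. -/
abbrev FA : Type := FreeAlgebra ℂ QGen

def ιE : FA := FreeAlgebra.ι ℂ QGen.E
def ιF : FA := FreeAlgebra.ι ℂ QGen.F
def ιK : FA := FreeAlgebra.ι ℂ QGen.K
def ιKi : FA := FreeAlgebra.ι ℂ QGen.Kinv

/-- Defining relations of `\bar U_i sl(2)` (at `q = i`, i.e. `p = 2`). -/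
inductive QRel : FA → FA → Prop
  | KKi : QRel (ιK * ιKi) 1
  | KiK : QRel (ιKi * ιK) 1
  | KEKi : QRel (ιK * ιE * ιKi) (-ιE)
  | KFKi : QRel (ιK * ιF * ιKi) (-ιF)
  | EF : QRel (ιE * ιF - ιF * ιE) ((2 * Complex.I)⁻¹ • (ιK - ιKi))
  | Esq : QRel (ιE ^ 2) 0
  | Fsq : QRel (ιF ^ 2) 0
  | K4 : QRel (ιK ^ 4) 1

/-- The restricted quantum group `\bar U_i sl(2)`: the quotient of the free algebra
by the two-sided ideal generated by the defining relations. -/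
abbrev Q : Type := RingQuot QRel

def gE : Q := RingQuot.mkAlgHom ℂ QRel ιE
def gF : Q := RingQuot.mkAlgHom ℂ QRel ιF
def gK : Q := RingQuot.mkAlgHom ℂ QRel ιK
def gKi : Q := RingQuot.mkAlgHom ℂ QRel ιKi

section Gadgets

variable (k : Type) [Field k] (A : Type) [Ring A] [Algebra k A]

abbrev TP2 : Type := A ⊗[k] A
abbrev TP3 : Type := A ⊗[k] (A ⊗[k] A)
abbrev TP4 : Type := A ⊗[k] (A ⊗[k] (A ⊗[k] A))

/-- Multiplication `a ⊗ b ↦ a * b`. -/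
def mulA : TP2 k A →ₗ[k] A := LinearMap.mul' k A

/-- Tensor flip `a ⊗ b ↦ b ⊗ a`. -/
def flipA : TP2 k A →ₗ[k] TP2 k A := (TensorProduct.comm k A A).toLinearMap

/-- `a ↦ a ⊗ 1`. -/
def lTen : A →ₗ[k] TP2 k A := (TensorProduct.mk k A A).flip 1

/-- `a ↦ 1 ⊗ a`. -/
def rTen : A →ₗ[k] TP2 k A := TensorProduct.mk k A A 1

/-- `a ⊗ b ↦ a ⊗ b ⊗ 1`. -/
def emb12 : TP2 k A →ₗ[k] TP3 k A := TensorProduct.map LinearMap.id (lTen k A)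

/-- `a ⊗ b ↦ a ⊗ 1 ⊗ b`. -/
def emb13 : TP2 k A →ₗ[k] TP3 k A := TensorProduct.map LinearMap.id (rTen k A)

/-- `a ⊗ b ↦ 1 ⊗ a ⊗ b`. -/
def emb23 : TP2 k A →ₗ[k] TP3 k A := TensorProduct.mk k A (TP2 k A) 1

/-- `a ⊗ b ⊗ c ↦ a ⊗ c ⊗ b`. -/
def perm132 : TP3 k A →ₗ[k] TP3 k A := TensorProduct.map LinearMap.id (flipA k A)

/-- `a ⊗ b ⊗ c ↦ b ⊗ c ⊗ a`. -/
def perm231 : TP3 k A →ₗ[k] TP3 k A :=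
  (TensorProduct.assoc k A A A).toLinearMap ∘ₗ (TensorProduct.comm k A (TP2 k A)).toLinearMap

/-- `a ⊗ b ⊗ c ↦ c ⊗ a ⊗ b`. -/
def perm312 : TP3 k A →ₗ[k] TP3 k A :=
  (TensorProduct.comm k (TP2 k A) A).toLinearMap ∘ₗ (TensorProduct.assoc k A A A).symm.toLinearMap

/-- `a ⊗ b ⊗ c ↦ b ⊗ a ⊗ c`. -/
def perm213 : TP3 k A →ₗ[k] TP3 k A :=
  (TensorProduct.assoc k A A A).toLinearMap ∘ₗ
    (TensorProduct.map (flipA k A) LinearMap.id) ∘ₗ (TensorProduct.assoc k A A A).symm.toLinearMap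

variable {k A}

/-- `(Δ ⊗ id)` on two tensor factors, landing in the triple tensor product. -/
def copL (D : A →ₐ[k] TP2 k A) : TP2 k A →ₗ[k] TP3 k A :=
  (TensorProduct.assoc k A A A).toLinearMap ∘ₗ TensorProduct.map D.toLinearMap LinearMap.id

/-- `(id ⊗ Δ)` on two tensor factors. -/
def copR (D : A →ₐ[k] TP2 k A) : TP2 k A →ₗ[k] TP3 k A :=
  TensorProduct.map LinearMap.id D.toLinearMap

/-- `(ε ⊗ id) : A ⊗ A → A`. -/
def cuL (ce : A →ₐ[k] k) : TP2 k A →ₗ[k] A :=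
  (TensorProduct.lid k A).toLinearMap ∘ₗ TensorProduct.map ce.toLinearMap LinearMap.id

/-- `(id ⊗ ε) : A ⊗ A → A`. -/
def cuR (ce : A →ₐ[k] k) : TP2 k A →ₗ[k] A :=
  (TensorProduct.rid k A).toLinearMap ∘ₗ TensorProduct.map LinearMap.id ce.toLinearMap

/-- `(id ⊗ ε ⊗ id) : A ⊗ A ⊗ A → A ⊗ A`. -/
def cuMid (ce : A →ₐ[k] k) : TP3 k A →ₗ[k] TP2 k A :=
  TensorProduct.map LinearMap.id (cuL ce)

/-- `(Δ ⊗ id ⊗ id)`. -/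
def cop4_1 (D : A →ₐ[k] TP2 k A) : TP3 k A →ₗ[k] TP4 k A :=
  (TensorProduct.assoc k A A (TP2 k A)).toLinearMap ∘ₗ TensorProduct.map D.toLinearMap LinearMap.id

/-- `(id ⊗ Δ ⊗ id)`. -/
def cop4_2 (D : A →ₐ[k] TP2 k A) : TP3 k A →ₗ[k] TP4 k A :=
  TensorProduct.map LinearMap.id (copL D)

/-- `(id ⊗ id ⊗ Δ)`. -/
def cop4_3 (D : A →ₐ[k] TP2 k A) : TP3 k A →ₗ[k] TP4 k A :=
  TensorProduct.map LinearMap.id (copR D)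

/-- `a ⊗ b ⊗ c ↦ a ⊗ b ⊗ c ⊗ 1`, i.e. `Φ ↦ Φ ⊗ 1`. -/
def pad4 : TP3 k A →ₗ[k] TP4 k A :=
  TensorProduct.map LinearMap.id (TensorProduct.map LinearMap.id (lTen k A))

/-- `a ⊗ b ⊗ c ↦ f(a) * g(b) * h(c)`. -/
def tmap3 (f g h : A →ₗ[k] A) : TP3 k A →ₗ[k] A :=
  mulA k A ∘ₗ TensorProduct.map f (mulA k A ∘ₗ TensorProduct.map g h)

/-- `a ⊗ b ↦ S(a) * b`, used in the antipode axiom `m ∘ (S ⊗ id) ∘ Δ = 1·ε`. -/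
def antipL (s : A →ₗ[k] A) : TP2 k A →ₗ[k] A := mulA k A ∘ₗ TensorProduct.map s LinearMap.id

/-- `a ⊗ b ↦ a * S(b)`. -/
def antipR (s : A →ₗ[k] A) : TP2 k A →ₗ[k] A := mulA k A ∘ₗ TensorProduct.map LinearMap.id s

end Gadgets

/-- Central idempotent `e₀ = (1 + K²)/2`. -/
def e0 : Q := (2:ℂ)⁻¹ • (1 + gK ^ 2)

/-- Central idempotent `e₁ = (1 − K²)/2`. -/
def e1 : Q := (2:ℂ)⁻¹ • (1 - gK ^ 2)

/-- `f⁺ = −i F`. -/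
def fp : Q := (-Complex.I) • gF

/-- `f⁻ = E K⁻¹`. -/
def fm : Q := gE * gKi

/-- The Casimir element `C = FE − (i/4)(K − K⁻¹)`. -/
def Cas : Q := gF * gE - (Complex.I / 4) • (gK - gKi)

def t2 (a b : Q) : TP2 ℂ Q := a ⊗ₜ[ℂ] b

def t3 (a b c : Q) : TP3 ℂ Q := a ⊗ₜ[ℂ] (b ⊗ₜ[ℂ] c)

def eEF : Q := gE * gF
def eEK : Q := gE * gK
def eFK : Q := gF * gK
def eEFK : Q := gE * gF * gK

/-- `Φ^{010}` component of the coassociator. -/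
def Phi010 : TP3 ℂ Q :=
  t3 1 1 1 - (1 + Complex.I) • t3 gE gK gF + (1 - Complex.I) • t3 eFK gK eEK
    + (2:ℂ) • t3 eEFK 1 eEFK

/-- `Φ^{101}` component of the coassociator. -/
def Phi101 : TP3 ℂ Q :=
  (Complex.I - 1) • t3 1 gF eEK + t3 1 gK 1 + (2:ℂ) • t3 1 eEF eEFK
    - (1 + Complex.I) • t3 1 eEK gF - (1 + Complex.I) • t3 gE eFK 1
    + (2 * Complex.I) • t3 gE eEFK gF + (1 - Complex.I) • t3 eFK gE 1
    - (2 * Complex.I) • t3 eFK eEFK eEK - (2:ℂ) • t3 eEFK eEF 1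

/-- `Φ^{111}` component of the coassociator. -/
def Phi111 (β : ℂ) : TP3 ℂ Q :=
  (Complex.I * β ^ 2) • (
    (1 + Complex.I) • t3 1 gF eEK - t3 1 gK 1 - (2:ℂ) • t3 1 eEF 1
      - (2 * Complex.I) • t3 1 eEF eEFK + (1 + Complex.I) • t3 1 eEK gF
      - (1 + Complex.I) • t3 gE 1 gF + (1 + Complex.I) • t3 gE eFK 1
      + (2 * Complex.I) • t3 gE eFK eEFK + (2:ℂ) • t3 gE eEFK gF
      - (1 + Complex.I) • t3 eFK 1 eEK + (1 + Complex.I) • t3 eFK gE 1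
      + (2 * Complex.I) • t3 eFK gE eEFK + (2:ℂ) • t3 eFK eEFK eEK
      + (2 * Complex.I) • t3 eEFK gF eEK + (2 * Complex.I) • t3 eEFK gK eEFK
      - (2 * Complex.I) • t3 eEFK eEF 1 + (2 * Complex.I) • t3 eEFK eEK gF
      + (4:ℂ) • t3 eEFK eEF eEFK)

/-- The coassociator `Φ` of the quasi-Hopf algebra structure on `Q`. -/
def Phi (β : ℂ) : TP3 ℂ Q :=
  t3 e0 e0 e0 + t3 e1 e0 e0 + Phi010 * t3 e0 e1 e0 + t3 e0 e0 e1
    + t3 e1 e1 e0 + Phi101 * t3 e1 e0 e1 + t3 e0 e1 e1 + Phi111 β * t3 e1 e1 e1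

def R00 : TP2 ℂ Q :=
  (2:ℂ)⁻¹ • ((t2 1 1 + t2 1 gK + t2 gK 1 - t2 gK gK) * (t2 1 1 + (2 * Complex.I) • t2 gE gF))

def R01 : TP2 ℂ Q :=
  (2:ℂ)⁻¹ • ((t2 1 1 - Complex.I • t2 1 gK + t2 gK 1 + Complex.I • t2 gK gK) *
    (t2 1 1 + (1 - Complex.I) • t2 eFK eEK - (1 - Complex.I) • t2 gE gF
      + (1 + Complex.I) • t2 eEFK 1 + (2 * Complex.I) • t2 eEFK eEFK))

def R10 : TP2 ℂ Q :=
  (2:ℂ)⁻¹ • ((t2 1 1 + t2 1 gK - Complex.I • t2 gK 1 + Complex.I • t2 gK gK) *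
    (t2 1 gK + (1 - Complex.I) • t2 eFK gE + (1 - Complex.I) • t2 gE eFK
      - (1 - Complex.I) • t2 1 eEF - (2 * Complex.I) • t2 eEFK eEF))

def R11 (β : ℂ) : TP2 ℂ Q :=
  (β / 2) • ((t2 1 1 - Complex.I • t2 1 gK - Complex.I • t2 gK 1 + t2 gK gK) *
    ((-Complex.I) • t2 gK 1 + (2 * Complex.I) • t2 eEK gF + (1 - Complex.I) • t2 gK eEFK
      - (1 + Complex.I) • t2 eEF 1 - (2 * Complex.I) • t2 eEF eEFK))

/-- The universal R-matrix `R` of the quasi-triangular quasi-Hopf structure on `Q`. -/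
def Rmat (β : ℂ) : TP2 ℂ Q :=
  R00 * t2 e0 e0 + R01 * t2 e0 e1 + R10 * t2 e1 e0 + R11 β * t2 e1 e1

/-- The standard R-matrix `R_st` of the quotient `Q/(K²-1)`. -/
def Rst : TP2 ℂ Q :=
  (2:ℂ)⁻¹ • ∑ m ∈ Finset.range 2, ∑ n ∈ Finset.range 2,
    ((-1:ℂ) ^ (m * n)) • (t2 (gK ^ m) (gK ^ n) * (t2 1 1 + (2 * Complex.I) • t2 gE gF))

/-- The monodromy matrix `M = R₂₁ · R`. -/
def Mmat (β : ℂ) : TP2 ℂ Q := flipA ℂ Q (Rmat β) * Rmat β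

/-- The ribbon element `v = (e₀ − iβ K e₁)(1 − 2 f⁺ f⁻)`. -/
def vRib (β : ℂ) : Q := (e0 - (Complex.I * β) • (gK * e1)) * (1 - (2:ℂ) • (fp * fm))

/-- The coevaluation element `β = e₀ − 2iβ² C e₁`. -/
def bbEl (β : ℂ) : Q := e0 - (2 * Complex.I * β ^ 2) • (Cas * e1)

/-- `b ⊗ c ↦ S(b · bb · S(c))`, inner part of the Drinfeld element. -/
def uInner (S : Q →ₗ[ℂ] Q) (bb : Q) : TP2 ℂ Q →ₗ[ℂ] Q :=
  S ∘ₗ mulA ℂ Q ∘ₗ TensorProduct.map (LinearMap.mulRight ℂ bb) S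

/-- `Φ' ⊗ Φ'' ⊗ Φ''' ↦ S(Φ'' · bb · S(Φ''')) ⊗ Φ'`. -/
def uMap1 (S : Q →ₗ[ℂ] Q) (bb : Q) : TP3 ℂ Q →ₗ[ℂ] TP2 ℂ Q :=
  TensorProduct.map (uInner S bb) LinearMap.id ∘ₗ (TensorProduct.comm ℂ Q (TP2 ℂ Q)).toLinearMap

/-- `R' ⊗ R'' ↦ S(R'') · al · R'`. -/
def uMap2 (S : Q →ₗ[ℂ] Q) (al : Q) : TP2 ℂ Q →ₗ[ℂ] Q :=
  mulA ℂ Q ∘ₗ TensorProduct.map (LinearMap.mulRight ℂ al ∘ₗ S) LinearMap.id ∘ₗ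
    (TensorProduct.comm ℂ Q Q).toLinearMap

/-- `(x ⊗ a) ⊗ (R' ⊗ R'') ↦ x · (S(R'') · al · R') · a`. -/
def uBig (S : Q →ₗ[ℂ] Q) (al : Q) : TP2 ℂ Q ⊗[ℂ] TP2 ℂ Q →ₗ[ℂ] Q :=
  mulA ℂ Q ∘ₗ TensorProduct.map LinearMap.id (mulA ℂ Q ∘ₗ (TensorProduct.comm ℂ Q Q).toLinearMap)
    ∘ₗ (TensorProduct.assoc ℂ Q Q Q).toLinearMap ∘ₗ TensorProduct.map LinearMap.id (uMap2 S al)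

/-- The Drinfeld element `u = Σ S(Φ''·b·S(Φ'''))·S(R'')·α·R'·Φ'` (with `α = 1`). -/
def uDrin (β : ℂ) (S : Q →ₗ[ℂ] Q) : Q :=
  uBig S 1 (uMap1 S (bbEl β) (Phi β) ⊗ₜ[ℂ] Rmat β)

/-- The balancing element `g = b · S(α) · v⁻¹ · u` (with `α = 1`). -/
def balG (β : ℂ) (S : Q →ₗ[ℂ] Q) : Q :=
  bbEl β * S 1 * Ring.inverse (vRib β) * uDrin β S

/-- The cointegral `c = (β²/i)·E·F·(1 + K + K² + K³)`. -/
def cInt (β : ℂ) : Q := (β ^ 2 / Complex.I) • (gE * gF * (1 + gK + gK ^ 2 + gK ^ 3))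

/-- The q-trace of a one-dimensional representation, with balancing element `K⁻¹`. -/
def qTr1 (ρ : Q →ₐ[ℂ] ℂ) : Q →ₗ[ℂ] ℂ := ρ.toLinearMap ∘ₗ LinearMap.mulLeft ℂ gK

/-- The q-trace of a two-dimensional (matrix) representation, with balancing element `K⁻¹`. -/
def qTrM (ρ : Q →ₐ[ℂ] Matrix (Fin 2) (Fin 2) ℂ) : Q →ₗ[ℂ] ℂ :=
  Matrix.traceLinearMap (Fin 2) ℂ ℂ ∘ₗ ρ.toLinearMap ∘ₗ LinearMap.mulLeft ℂ gK

/-- The Drinfeld mapping `φ ↦ (φ ⊗ id)(M)`. -/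
def drinfeldImg (β : ℂ) (φ : Q →ₗ[ℂ] ℂ) : Q :=
  (TensorProduct.lid ℂ Q) (TensorProduct.map φ LinearMap.id (Mmat β))

section Helpers

set_option maxSynthPendingDepth 8

variable {k : Type} [Field k] {A : Type} [Ring A] [Algebra k A]

theorem hAux_add_mul4 (x y z : TP4 k A) : (x + y) * z = x * z + y * z := add_mul x y z
theorem hAux_mul_add4 (x y z : TP4 k A) : z * (x + y) = z * x + z * y := mul_add z x y

/-- `S` is an anti-homomorphism. -/
theorem hAux_anti (Δ : A →ₐ[k] TP2 k A) (ce : A →ₐ[k] k)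
    (hco : ∀ a : A, copL Δ (Δ a) = copR Δ (Δ a))
    (hcuL : ∀ a : A, cuL ce (Δ a) = a) (hcuR : ∀ a : A, cuR ce (Δ a) = a)
    (S : A →ₗ[k] A)
    (hSL : ∀ a : A, antipL S (Δ a) = ce a • (1:A))
    (hSR : ∀ a : A, antipR S (Δ a) = ce a • (1:A)) :
    (∀ a b : A, S (a * b) = S b * S a) ∧ S 1 = 1 := by
  let C : Coalgebra k A :=
    { comul := Δ.toLinearMap
      counit := ce.toLinearMap
      coassoc := by
        refine LinearMap.ext fun a => ?_
        exact hco a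
      rTensor_counit_comp_comul := by
        refine LinearMap.ext fun a => ?_
        apply (TensorProduct.lid k A).injective
        refine (hcuL a).trans ?_
        simp
      lTensor_counit_comp_comul := by
        refine LinearMap.ext fun a => ?_
        apply (TensorProduct.rid k A).injective
        refine (hcuR a).trans ?_
        simp }
  let B : Bialgebra k A := Bialgebra.mk' k A (map_one ce) (fun {a b} => map_mul ce a b)
    (map_one Δ) (fun {a b} => map_mul Δ a b)
  let H : HopfAlgebra k A :=
    { B with
      antipode := S
      mul_antipode_rTensor_comul := by
        refine LinearMap.ext fun a => ?_
        refine (hSL a).trans ?_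
        exact (Algebra.algebraMap_eq_smul_one _).symm
      mul_antipode_lTensor_comul := by
        refine LinearMap.ext fun a => ?_
        refine (hSR a).trans ?_
        exact (Algebra.algebraMap_eq_smul_one _).symm }
  exact ⟨fun a b => HopfAlgebra.antipode_mul_antidistrib (R := k) a b,
    HopfAlgebra.antipode_one (R := k) (A := A)⟩

theorem hAux_copL_tmul (Δ : A →ₐ[k] TP2 k A) (p q : A) :
    copL Δ (p ⊗ₜ q) = TensorProduct.assoc k A A A (Δ p ⊗ₜ q) := rfl
theorem hAux_copR_tmul (Δ : A →ₐ[k] TP2 k A) (p q : A) :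
    copR Δ (p ⊗ₜ q) = p ⊗ₜ Δ q := rfl
theorem hAux_cuL_tmul (ce : A →ₐ[k] k) (p q : A) : cuL ce (p ⊗ₜ q) = ce p • q := by
  simp [cuL]
theorem hAux_cuR_tmul (ce : A →ₐ[k] k) (p q : A) : cuR ce (p ⊗ₜ q) = ce q • p := by
  simp [cuR]
theorem hAux_antipL_tmul (S : A →ₗ[k] A) (p q : A) : antipL S (p ⊗ₜ q) = S p * q := by
  simp [antipL, mulA]
theorem hAux_antipR_tmul (S : A →ₗ[k] A) (p q : A) : antipR S (p ⊗ₜ q) = p * S q := by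
  simp [antipR, mulA]
theorem hAux_tmap3_tmul (f g h : A →ₗ[k] A) (x y z : A) :
    tmap3 f g h (x ⊗ₜ (y ⊗ₜ z)) = f x * (g y * h z) := by
  simp [tmap3, mulA]

theorem hAux_G1 (S : A →ₗ[k] A) (hS : ∀ a b : A, S (a * b) = S b * S a)
    (Δ : A →ₐ[k] TP2 k A) (ce : A →ₐ[k] k)
    (hSR : ∀ a : A, antipR S (Δ a) = ce a • (1:A)) (w : TP3 k A) (D : TP2 k A) :
    tmap3 S LinearMap.id S (w * copR Δ D) = S (cuR ce D) * tmap3 S LinearMap.id S w := by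
  have key : ∀ (x y z p : A) (E : TP2 k A),
      tmap3 S LinearMap.id S ((x ⊗ₜ[k] (y ⊗ₜ[k] z)) * (p ⊗ₜ[k] E)) =
        S p * S x * y * antipR S E * S z := by
    intro x y z p E
    induction E using TensorProduct.induction_on with
    | zero => simp
    | add a b ha hb => simp only [TensorProduct.tmul_add, mul_add, map_add, ha, hb, add_mul]
    | tmul a b =>
      simp only [Algebra.TensorProduct.tmul_mul_tmul, hAux_tmap3_tmul, hAux_antipR_tmul, hS,
        LinearMap.id_apply, mul_assoc]
  induction D using TensorProduct.induction_on with
  | zero => simp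
  | add a b ha hb => simp only [mul_add, map_add, ha, hb, add_mul]
  | tmul p q =>
    rw [hAux_copR_tmul, hAux_cuR_tmul]
    induction w using TensorProduct.induction_on with
    | zero => simp
    | add a b ha hb => simp only [mul_add, map_add, ha, hb, add_mul]
    | tmul x t =>
      induction t using TensorProduct.induction_on with
      | zero => simp
      | add a b ha hb =>
        simp only [TensorProduct.tmul_add, mul_add, map_add, ha, hb, add_mul]
      | tmul y z =>
        rw [key, hSR, hAux_tmap3_tmul]
        simp [mul_assoc]

theorem hAux_G2 (S : A →ₗ[k] A) (hS : ∀ a b : A, S (a * b) = S b * S a)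
    (Δ : A →ₐ[k] TP2 k A) (ce : A →ₐ[k] k)
    (hSL : ∀ a : A, antipL S (Δ a) = ce a • (1:A)) (w : TP3 k A) (D : TP2 k A) :
    tmap3 S LinearMap.id S (copL Δ D * w) = tmap3 S LinearMap.id S w * S (cuL ce D) := by
  have key : ∀ (x y z p : A) (E : TP2 k A),
      tmap3 S LinearMap.id S (TensorProduct.assoc k A A A (E ⊗ₜ[k] p) * (x ⊗ₜ[k] (y ⊗ₜ[k] z))) =
        S x * antipL S E * y * S z * S p := by
    intro x y z p E
    induction E using TensorProduct.induction_on with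
    | zero => simp
    | add a b ha hb =>
      simp only [TensorProduct.add_tmul, mul_add, map_add, ha, hb, add_mul]
    | tmul a b =>
      simp only [TensorProduct.assoc_tmul, Algebra.TensorProduct.tmul_mul_tmul, hAux_tmap3_tmul,
        hAux_antipL_tmul, hS, LinearMap.id_apply, mul_assoc]
  induction D using TensorProduct.induction_on with
  | zero => simp
  | add a b ha hb => simp only [mul_add, map_add, ha, hb, add_mul]
  | tmul p q =>
    rw [hAux_copL_tmul, hAux_cuL_tmul]
    induction w using TensorProduct.induction_on with
    | zero => simp
    | add a b ha hb => simp only [mul_add, map_add, ha, hb, add_mul]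
    | tmul x t =>
      induction t using TensorProduct.induction_on with
      | zero => simp
      | add a b ha hb =>
        simp only [TensorProduct.tmul_add, mul_add, map_add, ha, hb, add_mul]
      | tmul y z =>
        rw [key, hSL, hAux_tmap3_tmul]
        simp [mul_assoc]

/-- `a ⊗ b ⊗ c ⊗ d ↦ S(a) b β S(c) d`. -/
def hAuxF (S : A →ₗ[k] A) (β : A) : TP4 k A →ₗ[k] A :=
  mulA k A ∘ₗ TensorProduct.map S (mulA k A ∘ₗ TensorProduct.map LinearMap.id
    (LinearMap.mulLeft k β ∘ₗ antipL S))

theorem hAuxF_tmul (S : A →ₗ[k] A) (β a b c d : A) :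
    hAuxF S β (a ⊗ₜ (b ⊗ₜ (c ⊗ₜ d))) = S a * (b * (β * (S c * d))) := by
  simp [hAuxF, antipL, mulA]

/-- Counit on the first tensor factor. -/
def hAuxE (B : Type) [Ring B] [Algebra k B] (ce : A →ₐ[k] k) : A ⊗[k] B →ₐ[k] B :=
  (Algebra.TensorProduct.lid k B).toAlgHom.comp (Algebra.TensorProduct.map ce (AlgHom.id k B))

theorem hAuxE_tmul (B : Type) [Ring B] [Algebra k B] (ce : A →ₐ[k] k) (a : A) (b : B) :
    hAuxE B ce (a ⊗ₜ[k] b) = ce a • b := by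
  simp [hAuxE]

/-- Counit on the last tensor factor. -/
def hAuxE' (ce : A →ₐ[k] k) : A ⊗[k] A →ₐ[k] A :=
  (Algebra.TensorProduct.rid k k A).toAlgHom.comp (Algebra.TensorProduct.map (AlgHom.id k A) ce)

theorem hAuxE'_tmul (ce : A →ₐ[k] k) (a b : A) :
    hAuxE' ce (a ⊗ₜ[k] b) = ce b • a := by
  simp [hAuxE']

/-- `id ⊗ id ⊗ ε`. -/
def hAuxE3 (ce : A →ₐ[k] k) : TP3 k A →ₐ[k] TP2 k A :=
  Algebra.TensorProduct.map (AlgHom.id k A) (hAuxE' ce)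

theorem hAuxE3_tmul (ce : A →ₐ[k] k) (a b c : A) :
    hAuxE3 ce (a ⊗ₜ[k] (b ⊗ₜ c)) = ce c • (a ⊗ₜ b) := by
  simp [hAuxE3, hAuxE'_tmul]

/-- induction principle for triple tensors -/
theorem hAux_ind3 {P : TP3 k A → Prop} (h0 : P 0) (ha : ∀ x y, P x → P y → P (x + y))
    (ht : ∀ a b c : A, P (a ⊗ₜ (b ⊗ₜ c))) (x : TP3 k A) : P x := by
  induction x using TensorProduct.induction_on with
  | zero => exact h0
  | add a b h1 h2 => exact ha _ _ h1 h2
  | tmul a t =>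
    induction t using TensorProduct.induction_on with
    | zero => simpa using h0
    | add u v h1 h2 => rw [TensorProduct.tmul_add]; exact ha _ _ h1 h2
    | tmul b c => exact ht a b c

/-- induction principle for quadruple tensors -/
theorem hAux_ind4 {P : TP4 k A → Prop} (h0 : P 0) (ha : ∀ x y, P x → P y → P (x + y))
    (ht : ∀ a b c d : A, P (a ⊗ₜ (b ⊗ₜ (c ⊗ₜ d)))) (x : TP4 k A) : P x := by
  induction x using TensorProduct.induction_on with
  | zero => exact h0
  | add a b h1 h2 => exact ha _ _ h1 h2
  | tmul a t =>
    refine hAux_ind3 (P := fun t => P (a ⊗ₜ t)) ?_ ?_ ?_ t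
    · simpa using h0
    · intro u v h1 h2
      rw [TensorProduct.tmul_add]; exact ha _ _ h1 h2
    · intro b c d; exact ht a b c d

theorem hAux_c1_tmul (Δ : A →ₐ[k] TP2 k A) (a b c : A) :
    cop4_1 Δ (a ⊗ₜ (b ⊗ₜ c)) = TensorProduct.assoc k A A (TP2 k A) (Δ a ⊗ₜ (b ⊗ₜ c)) := rfl
theorem hAux_c2_tmul (Δ : A →ₐ[k] TP2 k A) (a b c : A) :
    cop4_2 Δ (a ⊗ₜ (b ⊗ₜ c)) = a ⊗ₜ TensorProduct.assoc k A A A (Δ b ⊗ₜ c) := rfl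
theorem hAux_c3_tmul (Δ : A →ₐ[k] TP2 k A) (a b c : A) :
    cop4_3 Δ (a ⊗ₜ (b ⊗ₜ c)) = a ⊗ₜ (b ⊗ₜ Δ c) := rfl
theorem hAux_pad_tmul (a b c : A) :
    pad4 (k := k) (a ⊗ₜ (b ⊗ₜ c)) = a ⊗ₜ (b ⊗ₜ (c ⊗ₜ 1)) := rfl

/-- algebra map version of `cop4_1` -/
def hAux_c1 (Δ : A →ₐ[k] TP2 k A) : TP3 k A →ₐ[k] TP4 k A :=
  (Algebra.TensorProduct.assoc k k k A A (TP2 k A)).toAlgHom.comp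
    (Algebra.TensorProduct.map Δ (AlgHom.id k (TP2 k A)))

theorem hAux_c1_eq (Δ : A →ₐ[k] TP2 k A) (x : TP3 k A) : cop4_1 Δ x = hAux_c1 Δ x := by
  rfl

theorem hAux_L1 (S : A →ₗ[k] A) (hS : ∀ a b : A, S (a * b) = S b * S a) (β : A)
    (Δ : A →ₐ[k] TP2 k A) (ce : A →ₐ[k] k)
    (hSL : ∀ a : A, antipL S (Δ a) = ce a • (1:A)) (x : TP3 k A) (w : TP4 k A) :
    hAuxF S β (cop4_1 Δ x * w) =
      hAuxF S β (((1:A) ⊗ₜ[k] ((1:A) ⊗ₜ[k] (hAuxE (TP2 k A) ce x))) * w) := by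
  have key : ∀ (p q a b c d : A) (E : TP2 k A),
      hAuxF S β (TensorProduct.assoc k A A (TP2 k A) (E ⊗ₜ[k] (p ⊗ₜ[k] q)) *
        (a ⊗ₜ[k] (b ⊗ₜ[k] (c ⊗ₜ[k] d)))) =
        S a * (antipL S E * (b * (β * (S c * (S p * (q * d)))))) := by
    intro p q a b c d E
    induction E using TensorProduct.induction_on with
    | zero => simp
    | add u v ha hb =>
      simp only [TensorProduct.add_tmul, mul_add, map_add, ha, hb, add_mul]
    | tmul u v =>
      simp only [TensorProduct.assoc_tmul, Algebra.TensorProduct.tmul_mul_tmul, hAuxF_tmul,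
        hAux_antipL_tmul, hS, mul_assoc]
  induction x using hAux_ind3 with
  | h0 => simp
  | ha x y h1 h2 => simp only [TensorProduct.tmul_add, map_add, h1, h2, add_mul, hAux_add_mul4, hAux_mul_add4]
  | ht p q r =>
    induction w using hAux_ind4 with
    | h0 => simp
    | ha x y h1 h2 => simp only [hAux_mul_add4, map_add, h1, h2]
    | ht a b c d =>
      rw [hAux_c1_tmul, key, hSL, hAuxE_tmul]
      simp only [TensorProduct.tmul_smul, smul_mul_assoc, map_smul,
        Algebra.TensorProduct.tmul_mul_tmul, hAuxF_tmul, hS, one_mul, mul_smul_comm, mul_assoc]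

theorem hAux_L3 (S : A →ₗ[k] A) (hS : ∀ a b : A, S (a * b) = S b * S a) (β : A)
    (Δ : A →ₐ[k] TP2 k A) (ce : A →ₐ[k] k)
    (hSL : ∀ a : A, antipL S (Δ a) = ce a • (1:A)) (x : TP3 k A) (w : TP4 k A) :
    hAuxF S β (cop4_3 Δ x * w) =
      hAuxF S β ((TensorProduct.map LinearMap.id ((TensorProduct.mk k A (TP2 k A)).flip 1)
        (hAuxE3 ce x)) * w) := by
  have key : ∀ (p q a b c d : A) (E : TP2 k A),
      hAuxF S β ((p ⊗ₜ[k] (q ⊗ₜ[k] E)) * (a ⊗ₜ[k] (b ⊗ₜ[k] (c ⊗ₜ[k] d)))) =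
        S a * (S p * (q * (b * (β * (S c * (antipL S E * d)))))) := by
    intro p q a b c d E
    induction E using TensorProduct.induction_on with
    | zero => simp
    | add u v ha hb =>
      simp only [TensorProduct.tmul_add, mul_add, map_add, ha, hb, add_mul]
    | tmul u v =>
      simp only [Algebra.TensorProduct.tmul_mul_tmul, hAuxF_tmul,
        hAux_antipL_tmul, hS, mul_assoc]
  induction x using hAux_ind3 with
  | h0 => simp
  | ha x y h1 h2 => simp only [map_add, h1, h2, add_mul, hAux_add_mul4, hAux_mul_add4]
  | ht p q r =>
    induction w using hAux_ind4 with
    | h0 => simp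
    | ha x y h1 h2 => simp only [hAux_mul_add4, map_add, h1, h2]
    | ht a b c d =>
      rw [hAux_c3_tmul, key, hSL, hAuxE3_tmul]
      simp only [map_smul, TensorProduct.map_tmul, LinearMap.id_apply, LinearMap.flip_apply,
        TensorProduct.mk_apply, smul_mul_assoc, Algebra.TensorProduct.one_def,
        Algebra.TensorProduct.tmul_mul_tmul, hAuxF_tmul, hS, one_mul, mul_smul_comm, mul_assoc]

theorem hAux_L2 (S : A →ₗ[k] A) (hS : ∀ a b : A, S (a * b) = S b * S a) (β : A)
    (Δ : A →ₐ[k] TP2 k A) (ce : A →ₐ[k] k)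
    (hβ : ∀ a : A, antipR (LinearMap.mulLeft k β ∘ₗ S) (Δ a) = ce a • β)
    (x : TP3 k A) (w : TP4 k A) :
    hAuxF S β (w * cop4_2 Δ x) =
      hAuxF S β (w * (TensorProduct.map LinearMap.id
        (TensorProduct.mk k A (TP2 k A) 1 ∘ₗ TensorProduct.mk k A A 1)
        (cuMid ce x))) := by
  have key : ∀ (p q a b c d : A) (E : TP2 k A),
      hAuxF S β ((a ⊗ₜ[k] (b ⊗ₜ[k] (c ⊗ₜ[k] d))) *
        (p ⊗ₜ[k] TensorProduct.assoc k A A A (E ⊗ₜ[k] q))) =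
        S p * (S a * (b * (antipR (LinearMap.mulLeft k β ∘ₗ S) E * (S c * (d * q))))) := by
    intro p q a b c d E
    induction E using TensorProduct.induction_on with
    | zero => simp
    | add u v ha hb =>
      simp only [TensorProduct.tmul_add, TensorProduct.add_tmul, mul_add, map_add, ha, hb, add_mul]
    | tmul u v =>
      simp only [TensorProduct.assoc_tmul, Algebra.TensorProduct.tmul_mul_tmul, hAuxF_tmul,
        hAux_antipR_tmul, hS, mul_assoc, LinearMap.comp_apply, LinearMap.mulLeft_apply]
  induction x using hAux_ind3 with
  | h0 => simp
  | ha x y h1 h2 => simp only [map_add, h1, h2, hAux_add_mul4, hAux_mul_add4]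
  | ht p q r =>
    induction w using hAux_ind4 with
    | h0 => simp
    | ha x y h1 h2 => simp only [hAux_add_mul4, map_add, h1, h2]
    | ht a b c d =>
      rw [hAux_c2_tmul, key, hβ]
      simp only [cuMid, hAux_cuL_tmul, map_smul, TensorProduct.map_tmul, LinearMap.id_apply,
        LinearMap.comp_apply, TensorProduct.tmul_smul, mul_one,
        TensorProduct.mk_apply, smul_mul_assoc,
        Algebra.TensorProduct.tmul_mul_tmul, hAuxF_tmul, hS, one_mul, mul_smul_comm, mul_assoc]

theorem hAux_Fpad (S : A →ₗ[k] A) (β : A) (x : TP3 k A) :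
    hAuxF S β (pad4 x) = tmap3 S LinearMap.id (LinearMap.mulLeft k β ∘ₗ S) x := by
  induction x using hAux_ind3 with
  | h0 => simp
  | ha x y h1 h2 => simp only [map_add, h1, h2]
  | ht a b c => simp [hAux_pad_tmul, hAuxF_tmul, hAux_tmap3_tmul]

theorem hAux_Fone (S : A →ₗ[k] A) (h1 : S 1 = 1) (β : A) (x : TP3 k A) :
    hAuxF S β (1 ⊗ₜ x) = tmap3 LinearMap.id (LinearMap.mulLeft k β ∘ₗ S) LinearMap.id x := by
  induction x using hAux_ind3 with
  | h0 => simp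
  | ha x y h1 h2 => simp only [map_add, TensorProduct.tmul_add, h1, h2]
  | ht a b c => simp [hAuxF_tmul, hAux_tmap3_tmul, h1, mul_assoc]

/-- `ε ⊗ ε ⊗ id` from four to two factors. -/
def hAuxEE (ce : A →ₐ[k] k) : TP4 k A →ₐ[k] TP2 k A :=
  (hAuxE (TP2 k A) ce).comp (hAuxE (TP3 k A) ce)

theorem hAuxEE_tmul (ce : A →ₐ[k] k) (a b : A) (t : TP2 k A) :
    hAuxEE ce (a ⊗ₜ (b ⊗ₜ t)) = (ce a * ce b) • t := by
  simp [hAuxEE, hAuxE_tmul, mul_smul]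

/-- `id ⊗ id ⊗ ε ⊗ ε`. -/
def hAuxEE' (ce : A →ₐ[k] k) : TP4 k A →ₐ[k] TP2 k A :=
  Algebra.TensorProduct.map (AlgHom.id k A)
    ((hAuxE' ce).comp (hAuxE3 ce))

theorem hAuxEE'_tmul (ce : A →ₐ[k] k) (a b c d : A) :
    hAuxEE' ce (a ⊗ₜ (b ⊗ₜ (c ⊗ₜ d))) = (ce c * ce d) • (a ⊗ₜ b) := by
  simp [hAuxEE', hAuxE'_tmul, hAuxE3_tmul, smul_smul, mul_comm]

theorem hAux_P (Δ : A →ₐ[k] TP2 k A) (ce : A →ₐ[k] k)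
    (hcuL : ∀ a : A, cuL ce (Δ a) = a)
    (Φ : TP3 k A) (hΦ : IsUnit Φ) (hΦcu : cuMid ce Φ = 1)
    (hcoc : cop4_1 Δ Φ * cop4_3 Δ Φ = pad4 Φ * cop4_2 Δ Φ * ((1:A) ⊗ₜ[k] Φ)) :
    hAuxE (TP2 k A) ce Φ = 1 := by
  have e1 : ∀ x, hAuxEE ce (cop4_1 Δ x) = hAuxE (TP2 k A) ce x := by
    intro x
    have key : ∀ (t : TP2 k A) (D : TP2 k A),
        hAuxEE ce (TensorProduct.assoc k A A (TP2 k A) (D ⊗ₜ t)) = ce (cuL ce D) • t := by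
      intro t D
      induction D using TensorProduct.induction_on with
      | zero => simp
      | add u v h1 h2 => simp only [TensorProduct.add_tmul, map_add, h1, h2, add_smul]
      | tmul u v => simp [hAuxEE_tmul, hAux_cuL_tmul]
    induction x using hAux_ind3 with
    | h0 => simp
    | ha x y h1 h2 => simp only [map_add, h1, h2]
    | ht a b c => rw [hAux_c1_tmul, key, hcuL, hAuxE_tmul]
  have e3 : ∀ x, hAuxEE ce (cop4_3 Δ x) = Δ (hAuxE A ce (cuMid ce x)) := by
    intro x
    induction x using hAux_ind3 with
    | h0 => simp
    | ha x y h1 h2 => simp only [map_add, h1, h2]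
    | ht a b c =>
      simp [hAux_c3_tmul, hAuxEE_tmul, cuMid, hAux_cuL_tmul, hAuxE_tmul, mul_smul]
      try rw [smul_comm]
  have ep : ∀ x, hAuxEE ce (pad4 x) = (hAuxE A ce (cuMid ce x)) ⊗ₜ 1 := by
    intro x
    induction x using hAux_ind3 with
    | h0 => simp
    | ha x y h1 h2 => simp only [map_add, h1, h2, TensorProduct.add_tmul]
    | ht a b c =>
      simp [hAux_pad_tmul, hAuxEE_tmul, cuMid, hAux_cuL_tmul, hAuxE_tmul, mul_smul,
        TensorProduct.smul_tmul']
      try rw [smul_comm]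
  have e2 : ∀ x, hAuxEE ce (cop4_2 Δ x) = hAuxE (TP2 k A) ce x := by
    intro x
    have key : ∀ (a c : A) (D : TP2 k A),
        hAuxEE ce (a ⊗ₜ TensorProduct.assoc k A A A (D ⊗ₜ c)) = ce a • (cuL ce D ⊗ₜ c) := by
      intro a c D
      induction D using TensorProduct.induction_on with
      | zero => simp
      | add u v h1 h2 =>
        simp only [TensorProduct.add_tmul, TensorProduct.tmul_add, map_add, h1, h2, smul_add]
      | tmul u v => simp [hAuxEE_tmul, hAux_cuL_tmul, mul_smul, TensorProduct.smul_tmul']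
    induction x using hAux_ind3 with
    | h0 => simp
    | ha x y h1 h2 => simp only [map_add, h1, h2]
    | ht a b c => rw [hAux_c2_tmul, key, hcuL, hAuxE_tmul]
  have e4 : ∀ x : TP3 k A, hAuxEE ce ((1:A) ⊗ₜ x) = hAuxE (TP2 k A) ce x := by
    intro x
    simp [hAuxEE, hAuxE_tmul]
  have h := congrArg (hAuxEE ce) hcoc
  simp only [map_mul, e1, e2, e3, e4, ep, hΦcu, map_one, mul_one,
    ← Algebra.TensorProduct.one_def, one_mul] at h
  have hu : IsUnit (hAuxE (TP2 k A) ce Φ) := hΦ.map _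
  exact (hu.mul_left_cancel ((mul_one _).trans h)).symm

theorem hAux_Q (Δ : A →ₐ[k] TP2 k A) (ce : A →ₐ[k] k)
    (hcuL : ∀ a : A, cuL ce (Δ a) = a) (hcuR : ∀ a : A, cuR ce (Δ a) = a)
    (Φ : TP3 k A) (hΦ : IsUnit Φ) (hΦcu : cuMid ce Φ = 1)
    (hcoc : cop4_1 Δ Φ * cop4_3 Δ Φ = pad4 Φ * cop4_2 Δ Φ * ((1:A) ⊗ₜ[k] Φ)) :
    hAuxE3 ce Φ = 1 := by
  have e1 : ∀ x, hAuxEE' ce (cop4_1 Δ x) = Δ (hAuxE' ce (cuMid ce x)) := by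
    intro x
    have key : ∀ (b c : A) (D : TP2 k A),
        hAuxEE' ce (TensorProduct.assoc k A A (TP2 k A) (D ⊗ₜ (b ⊗ₜ c))) = (ce b * ce c) • D := by
      intro b c D
      induction D using TensorProduct.induction_on with
      | zero => simp
      | add u v h1 h2 => simp only [TensorProduct.add_tmul, map_add, h1, h2, smul_add]
      | tmul u v => simp [hAuxEE'_tmul]
    induction x using hAux_ind3 with
    | h0 => simp
    | ha x y h1 h2 => simp only [map_add, h1, h2]
    | ht a b c =>
      rw [hAux_c1_tmul, key]
      simp [cuMid, hAux_cuL_tmul, hAuxE'_tmul, mul_smul]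
  have e3 : ∀ x, hAuxEE' ce (cop4_3 Δ x) = hAuxE3 ce x := by
    intro x
    have key : ∀ (a b : A) (D : TP2 k A),
        hAuxEE' ce (a ⊗ₜ (b ⊗ₜ D)) = ce (cuL ce D) • (a ⊗ₜ b) := by
      intro a b D
      induction D using TensorProduct.induction_on with
      | zero => simp
      | add u v h1 h2 => simp only [TensorProduct.tmul_add, map_add, h1, h2, add_smul]
      | tmul u v => simp [hAuxEE'_tmul, hAux_cuL_tmul]
    induction x using hAux_ind3 with
    | h0 => simp
    | ha x y h1 h2 => simp only [map_add, h1, h2]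
    | ht a b c => rw [hAux_c3_tmul, key, hcuL, hAuxE3_tmul]
  have ep : ∀ x, hAuxEE' ce (pad4 x) = hAuxE3 ce x := by
    intro x
    induction x using hAux_ind3 with
    | h0 => simp
    | ha x y h1 h2 => simp only [map_add, h1, h2]
    | ht a b c => simp [hAux_pad_tmul, hAuxEE'_tmul, hAuxE3_tmul]
  have e2 : ∀ x, hAuxEE' ce (cop4_2 Δ x) = hAuxE3 ce x := by
    intro x
    have key : ∀ (a c : A) (D : TP2 k A),
        hAuxEE' ce (a ⊗ₜ TensorProduct.assoc k A A A (D ⊗ₜ c)) = ce c • (a ⊗ₜ cuR ce D) := by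
      intro a c D
      induction D using TensorProduct.induction_on with
      | zero => simp
      | add u v h1 h2 =>
        simp only [TensorProduct.add_tmul, TensorProduct.tmul_add, map_add, h1, h2, smul_add]
      | tmul u v =>
        simp [hAuxEE'_tmul, hAux_cuR_tmul, smul_smul, mul_comm]
    induction x using hAux_ind3 with
    | h0 => simp
    | ha x y h1 h2 => simp only [map_add, h1, h2]
    | ht a b c => rw [hAux_c2_tmul, key, hcuR, hAuxE3_tmul]
  have e4 : ∀ x : TP3 k A, hAuxEE' ce ((1:A) ⊗ₜ x) = 1 ⊗ₜ hAuxE' ce (cuMid ce x) := by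
    intro x
    induction x using hAux_ind3 with
    | h0 => simp
    | ha x y h1 h2 => simp only [map_add, TensorProduct.tmul_add, h1, h2]
    | ht a b c =>
      simp [hAuxEE'_tmul, cuMid, hAux_cuL_tmul, hAuxE'_tmul, mul_smul]
  have h := congrArg (hAuxEE' ce) hcoc
  simp only [map_mul, e1, e2, e3, e4, ep, hΦcu, map_one, mul_one,
    ← Algebra.TensorProduct.one_def, one_mul] at h
  have hu : IsUnit (hAuxE3 ce Φ) := hΦ.map _
  exact (hu.mul_left_cancel ((mul_one _).trans h)).symm

end Helpers

/-- for a Hopf algebra `A` with a counital invertible 3-cocycle `Φ`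
intertwining the iterated coproducts, if `γ = Σ S(Φ')·Φ''·S(Φ''')` is invertible,
then `(A, Φ, S, α = 1, β = γ⁻¹)` is a quasi-Hopf algebra. -/
theorem statement14 (k : Type) [Field k] (A : Type) [Ring A] [Algebra k A]
    (Δ : A →ₐ[k] TP2 k A) (ce : A →ₐ[k] k)
    (hco : ∀ a : A, copL Δ (Δ a) = copR Δ (Δ a))
    (hcuL : ∀ a : A, cuL ce (Δ a) = a) (hcuR : ∀ a : A, cuR ce (Δ a) = a)
    (S : A →ₗ[k] A)
    (hSL : ∀ a : A, antipL S (Δ a) = ce a • (1:A))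
    (hSR : ∀ a : A, antipR S (Δ a) = ce a • (1:A))
    (Φ : TP3 k A) (hΦ : IsUnit Φ) (hΦcu : cuMid ce Φ = 1)
    (hint : ∀ a : A, copL Δ (Δ a) = Φ * copR Δ (Δ a) * Ring.inverse Φ)
    (hcoc : cop4_1 Δ Φ * cop4_3 Δ Φ = pad4 Φ * cop4_2 Δ Φ * ((1:A) ⊗ₜ[k] Φ))
    (hγ : IsUnit (tmap3 S LinearMap.id S Φ)) :
    (∀ a : A, antipL S (Δ a) = ce a • (1:A)) ∧
    (∀ a : A,
      antipR (LinearMap.mulLeft k (Ring.inverse (tmap3 S LinearMap.id S Φ)) ∘ₗ S) (Δ a) =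
        ce a • Ring.inverse (tmap3 S LinearMap.id S Φ)) ∧
    tmap3 S LinearMap.id
      (LinearMap.mulLeft k (Ring.inverse (tmap3 S LinearMap.id S Φ)) ∘ₗ S) Φ = 1 ∧
    tmap3 LinearMap.id
      (LinearMap.mulLeft k (Ring.inverse (tmap3 S LinearMap.id S Φ)) ∘ₗ S) LinearMap.id
      (Ring.inverse Φ) = 1 := by
  set_option maxSynthPendingDepth 8 in
  (
    obtain ⟨hS, hS1⟩ := hAux_anti Δ ce hco hcuL hcuR S hSL hSR
    have hcomm : ∀ a, S a * tmap3 S LinearMap.id S Φ = tmap3 S LinearMap.id S Φ * S a := by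
      intro a
      have h1 := hAux_G1 S hS Δ ce hSR Φ (Δ a)
      have h2 := hAux_G2 S hS Δ ce hSL Φ (Δ a)
      rw [hcuR] at h1
      rw [hcuL] at h2
      rw [← h1, ← h2, hint a, mul_assoc, Ring.inverse_mul_cancel _ hΦ, mul_one]
    have hγ' := hγ
    generalize hg : tmap3 S LinearMap.id S Φ = γ at hcomm hγ' ⊢
    have hcomm' : ∀ a, Ring.inverse γ * S a = S a * Ring.inverse γ := by
      intro a
      have hi := Ring.inverse_mul_cancel γ hγ'
      have hj := Ring.mul_inverse_cancel γ hγ'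
      calc Ring.inverse γ * S a = Ring.inverse γ * (S a * γ) * Ring.inverse γ := by
            rw [mul_assoc, mul_assoc, hj, mul_one]
        _ = S a * Ring.inverse γ := by rw [hcomm, ← mul_assoc, hi, one_mul]
    have h2 : ∀ a : A, antipR (LinearMap.mulLeft k (Ring.inverse γ) ∘ₗ S) (Δ a) =
        ce a • Ring.inverse γ := by
      intro a
      have : ∀ D : TP2 k A, antipR (LinearMap.mulLeft k (Ring.inverse γ) ∘ₗ S) D =
          antipR S D * Ring.inverse γ := by
        intro D
        induction D using TensorProduct.induction_on with
        | zero => simp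
        | add u v ha hb => simp only [map_add, ha, hb, add_mul]
        | tmul u v => simp [hAux_antipR_tmul, hcomm', mul_assoc]
      rw [this, hSR, smul_mul_assoc, one_mul]
    have h3 : tmap3 S LinearMap.id (LinearMap.mulLeft k (Ring.inverse γ) ∘ₗ S) Φ = 1 := by
      have : ∀ x : TP3 k A, tmap3 S LinearMap.id (LinearMap.mulLeft k (Ring.inverse γ) ∘ₗ S) x =
          tmap3 S LinearMap.id S x * Ring.inverse γ := by
        intro x
        induction x using hAux_ind3 with
        | h0 => simp
        | ha x y h1 h2 => simp only [map_add, h1, h2, add_mul]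
        | ht a b c => simp [hAux_tmap3_tmul, hcomm', mul_assoc]
      rw [this, hg, Ring.mul_inverse_cancel γ hγ']
    refine ⟨hSL, h2, h3, ?_⟩
    set Ψ := Ring.inverse Φ with hΨ
    have i1 : Ψ * Φ = 1 := Ring.inverse_mul_cancel Φ hΦ
    have i2 : Φ * Ψ = 1 := Ring.mul_inverse_cancel Φ hΦ
    have hP := hAux_P Δ ce hcuL Φ hΦ hΦcu hcoc
    have hQ := hAux_Q Δ ce hcuL hcuR Φ hΦ hΦcu hcoc
    have hPΨ : hAuxE (TP2 k A) ce Ψ = 1 := by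
      have := congrArg (hAuxE (TP2 k A) ce) i1
      rwa [map_mul, hP, mul_one, map_one] at this
    have c1 : cop4_1 Δ Ψ * cop4_1 Δ Φ = 1 := by
      rw [hAux_c1_eq, hAux_c1_eq, ← map_mul, i1, map_one]
    have c2 : ((1:A) ⊗ₜ[k] Φ) * ((1:A) ⊗ₜ[k] Ψ) = 1 := by
      rw [Algebra.TensorProduct.tmul_mul_tmul, i2, one_mul, ← Algebra.TensorProduct.one_def]
    have pent : cop4_1 Δ Ψ * (pad4 Φ * cop4_2 Δ Φ) = cop4_3 Δ Φ * ((1:A) ⊗ₜ[k] Ψ) := by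
      calc cop4_1 Δ Ψ * (pad4 Φ * cop4_2 Δ Φ)
          = cop4_1 Δ Ψ * (pad4 Φ * cop4_2 Δ Φ * (((1:A) ⊗ₜ[k] Φ) * ((1:A) ⊗ₜ[k] Ψ))) := by
            rw [c2, mul_one]
        _ = cop4_1 Δ Ψ * ((cop4_1 Δ Φ * cop4_3 Δ Φ) * ((1:A) ⊗ₜ[k] Ψ)) := by
            rw [hcoc]; simp only [mul_assoc]
        _ = (cop4_1 Δ Ψ * cop4_1 Δ Φ) * (cop4_3 Δ Φ * ((1:A) ⊗ₜ[k] Ψ)) := by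
            simp only [mul_assoc]
        _ = _ := by rw [c1, one_mul]
    have hF := congrArg (hAuxF S (Ring.inverse γ)) pent
    rw [hAux_L1 S hS _ Δ ce hSL, hPΨ, hAux_L3 S hS _ Δ ce hSL, hQ,
      ← Algebra.TensorProduct.one_def, ← Algebra.TensorProduct.one_def, one_mul,
      hAux_L2 S hS _ Δ ce h2, hΦcu] at hF
    simp only [Algebra.TensorProduct.one_def (A := A) (B := A), TensorProduct.map_tmul,
      LinearMap.id_apply, LinearMap.comp_apply, LinearMap.flip_apply, TensorProduct.mk_apply] at hF
    simp only [← Algebra.TensorProduct.one_def, one_mul, mul_one] at hF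
    rw [hAux_Fpad, hAux_Fone S hS1, h3] at hF
    exact hF.symm
  )
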